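/- Let f : ℝ^d → ℝ^d be Lipschitz continuous with constant L > 0, and let u : [0,T] → ℝ^d solve u' = f(u), u(0) = c₀, with ‖u''‖ ≤ M on [0,T]. Fix positive integers p, k and set Δt = T/(pk). Let (u_n)_{n=0}^{kp} be the explicit Euler iterates with step Δt: u₀ = c₀, u_{n+1} = u_n + Δt f(u_n). Let N : ℝ^d → ℝ^d (the corrector 'NeurVec') be Lipschitz continuous with Lipschitz constant kΔt · L_NV for some L_NV > 0. Define the corrected coarse-step iterates û₀ = c₀, û_{k(n+1)} = û_{kn} + kΔt · f(û_{kn}) + N(û_{kn}) for n = 0, …, p − 1. Define the residuals V_n = (u_{k(n+1)} − u_{kn})/(kΔt) − f(u_{kn}) − N(u_{kn})/(kΔt) and the mean-squared training loss LS = (1/p) Σ_{n=0}^{p−1} ‖V_n‖². Then ‖û_{kp} − u(T)‖ ≤ (M · exp(2TL)/(2L)) · Δt + (√T · exp(T(L + L_NV)) / √(L + L_NV)) · LS^{1/2}. -/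

import Mathlib

/-!
The error splits through the fine Euler iterate at time `T`: `Uhat p - u T = (Uhat p - U (k p)) +
(U (k p) - u T)`.

For the second term, the mean value inequality applied twice gives the local truncation bound
`‖u (t + h) - u t - h u' t‖ ≤ M h²`. Discrete Grönwall then gives the global error
`(M Δt / L) (exp (T L) - 1)`. The factor two lost against the sharp Taylor remainder is absorbed by
`2 (x - 1) ≤ x²` with `x = exp (T L)`.

For the first term, `E n = ‖Uhat n - U (k n)‖` satisfies `E (n + 1) ≤ q E n + h ‖V n‖` with
`h = k Δt = T / p` and `q = 1 + h (L + L_NV)`. A Cauchy–Schwarz form of the discrete Grönwall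
inequality (`sq_gronwall`) gives `(q² - 1) (E p)² ≤ (q ^ (2 p) - 1) h² ∑ ‖V n‖²`. The claim follows
from `q² - 1 ≥ h (L + L_NV)` and `q ^ p ≤ exp (T (L + L_NV))`.
-/

/-- Second-order local truncation error of an explicit Euler step, without the sharp factor `1/2`. -/
lemma euler_truncation {E : Type*} [NormedAddCommGroup E] [NormedSpace ℝ E]
    {u u' u'' : ℝ → E} {M T : ℝ}
    (hu' : ∀ t ∈ Set.Icc (0 : ℝ) T, HasDerivAt u (u' t) t)
    (hu'' : ∀ t ∈ Set.Icc (0 : ℝ) T, HasDerivAt u' (u'' t) t)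
    (hM : ∀ t ∈ Set.Icc (0 : ℝ) T, ‖u'' t‖ ≤ M)
    {t h : ℝ} (ht : 0 ≤ t) (hh : 0 ≤ h) (hth : t + h ≤ T) :
    ‖u (t + h) - u t - h • u' t‖ ≤ M * h ^ 2 := by
  have hM0 : 0 ≤ M := (norm_nonneg _).trans (hM t ⟨ht, by linarith⟩)
  have hsub : ∀ s ∈ Set.Icc t (t + h), s ∈ Set.Icc (0 : ℝ) T :=
    fun s hs => ⟨ht.trans hs.1, hs.2.trans hth⟩
  have htm : t ∈ Set.Icc t (t + h) := ⟨le_rfl, by linarith⟩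
  have hthm : t + h ∈ Set.Icc t (t + h) := ⟨by linarith, le_rfl⟩
  have h1 : ∀ s ∈ Set.Icc t (t + h), ‖u' s - u' t‖ ≤ M * h := by
    intro s hs
    have := (convex_Icc t (t + h)).norm_image_sub_le_of_norm_hasDerivWithin_le
      (fun x hx => (hu'' x (hsub x hx)).hasDerivWithinAt) (fun x hx => hM x (hsub x hx)) htm hs
    refine this.trans (mul_le_mul_of_nonneg_left ?_ hM0)
    rw [Real.norm_eq_abs, abs_of_nonneg (by linarith [hs.1])]
    linarith [hs.2]
  have h2 := (convex_Icc t (t + h)).norm_image_sub_le_of_norm_hasDerivWithin_le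
      (f := fun s => u s - s • u' t) (f' := fun s => u' s - (1 : ℝ) • u' t) (C := M * h)
      (fun x hx => ((hu' x (hsub x hx)).sub
        ((hasDerivAt_id x).smul_const (u' t))).hasDerivWithinAt)
      (fun x hx => by simpa using h1 x hx) htm hthm
  have e1 : u (t + h) - (t + h) • u' t - (u t - t • u' t) = u (t + h) - u t - h • u' t := by
    module
  have e2 : ‖t + h - t‖ = h := by rw [add_sub_cancel_left, Real.norm_of_nonneg hh]
  simp only [e1, e2] at h2
  linarith [h2, show M * h * h = M * h ^ 2 by ring]

lemma one_add_pow_le_exp {x y : ℝ} (hx : 0 ≤ x) (n : ℕ) (h : n * x = y) :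
    (1 + x) ^ n ≤ Real.exp y := by
  rw [← h, Real.exp_nat_mul]
  exact pow_le_pow_left₀ (by linarith) (by linarith [Real.add_one_le_exp x]) n

/-- Discrete Grönwall inequality with a square-summed forcing term: Cauchy–Schwarz applied to
`a n ≤ ∑ q ^ (n - 1 - i) * b i`, with the geometric sum `∑ q ^ (2 i)` cleared of its denominator. -/
lemma sq_gronwall {a b : ℕ → ℝ} {q : ℝ} (hq : 1 < q) (ha : ∀ n, 0 ≤ a n) (hb : ∀ n, 0 ≤ b n)
    (h0 : a 0 = 0) (hstep : ∀ n, a (n + 1) ≤ q * a n + b n) (n : ℕ) :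
    (q ^ 2 - 1) * a n ^ 2 ≤ ((q ^ n) ^ 2 - 1) * ∑ i ∈ Finset.range n, b i ^ 2 := by
  have hC : 0 < q ^ 2 - 1 := by nlinarith
  induction n with
  | zero => simp [h0]
  | succ n ih =>
    rw [Finset.sum_range_succ]
    have hG : 0 ≤ (q ^ n) ^ 2 - 1 := by
      have := one_le_pow₀ (n := n) hq.le
      nlinarith
    have hW : 0 ≤ ∑ i ∈ Finset.range n, b i ^ 2 := Finset.sum_nonneg fun i _ => sq_nonneg _
    have e : (q ^ (n + 1)) ^ 2 - 1 = q ^ 2 * ((q ^ n) ^ 2 - 1) + (q ^ 2 - 1) := by ring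
    rw [e]
    have hs : a (n + 1) ^ 2 ≤ (q * a n + b n) ^ 2 := pow_le_pow_left₀ (ha _) (hstep n) 2
    generalize (q ^ n) ^ 2 - 1 = G at *
    generalize ∑ i ∈ Finset.range n, b i ^ 2 = W at *
    have hx := ha n
    have hy := hb n
    generalize a n = x at *
    generalize b n = y at *
    generalize q ^ 2 - 1 = C at *
    -- The cross term, by AM-GM: `(2 C q x y)² ≤ 4 (C W) (q² G y²) ≤ (C W + q² G y²)²`.
    have hcross : 2 * C * q * x * y ≤ C * W + q ^ 2 * G * y ^ 2 := by
      refine (pow_le_pow_iff_left₀ (by positivity) (by positivity) two_ne_zero).mp ?_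
      have h1 := mul_le_mul_of_nonneg_left ih (show 0 ≤ 4 * C * q ^ 2 * y ^ 2 by positivity)
      nlinarith [sq_nonneg (C * W - q ^ 2 * G * y ^ 2)]
    have h2 := mul_le_mul_of_nonneg_left hs hC.le
    have h3 := mul_le_mul_of_nonneg_left ih (sq_nonneg q)
    nlinarith

/-- Global error of the explicit Euler method after `n` steps. -/
lemma euler_error {E : Type*} [NormedAddCommGroup E] [NormedSpace ℝ E] {f : E → E}
    {u u' u'' : ℝ → E} {L M T h : ℝ} (hL : 0 < L) (hh : 0 < h)
    (hf : ∀ x y, ‖f x - f y‖ ≤ L * ‖x - y‖)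
    (hu' : ∀ t ∈ Set.Icc (0 : ℝ) T, HasDerivAt u (u' t) t)
    (hode : ∀ t ∈ Set.Icc (0 : ℝ) T, u' t = f (u t))
    (hu'' : ∀ t ∈ Set.Icc (0 : ℝ) T, HasDerivAt u' (u'' t) t)
    (hM : ∀ t ∈ Set.Icc (0 : ℝ) T, ‖u'' t‖ ≤ M)
    {U : ℕ → E} (hU0 : U 0 = u 0) (hUstep : ∀ n, U (n + 1) = U n + h • f (U n))
    (n : ℕ) (hn : n * h ≤ T) :
    ‖U n - u (n * h)‖ ≤ M * h / L * ((1 + h * L) ^ n - 1) := by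
  induction n with
  | zero => simp [hU0]
  | succ n ih =>
    push_cast at hn ⊢
    have ht : 0 ≤ n * h := by positivity
    have hnT : n * h + h ≤ T := by linarith
    have ih := ih (by linarith)
    have htr := euler_truncation hu' hu'' hM ht hh.le hnT
    rw [hode (n * h) ⟨ht, by linarith⟩] at htr
    have e : U (n + 1) - u ((n + 1) * h) = (U n - u (n * h)) + h • (f (U n) - f (u (n * h)))
        - (u (n * h + h) - u (n * h) - h • f (u (n * h))) := by
      rw [hUstep, show ((n : ℝ) + 1) * h = n * h + h by ring]
      module
    have h1 : ‖h • (f (U n) - f (u (n * h)))‖ ≤ h * (L * ‖U n - u (n * h)‖) := by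
      rw [norm_smul, Real.norm_of_nonneg hh.le]
      exact mul_le_mul_of_nonneg_left (hf _ _) hh.le
    have h2 : ‖U (n + 1) - u ((n + 1) * h)‖ ≤ (1 + h * L) * ‖U n - u (n * h)‖ + M * h ^ 2 := by
      rw [e]
      have := norm_sub_le ((U n - u (n * h)) + h • (f (U n) - f (u (n * h))))
        (u (n * h + h) - u (n * h) - h • f (u (n * h)))
      have := norm_add_le (U n - u (n * h)) (h • (f (U n) - f (u (n * h))))
      linarith
    refine h2.trans ((add_le_add_left (mul_le_mul_of_nonneg_left ih
      (by positivity : 0 ≤ 1 + h * L)) _).trans (le_of_eq ?_))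
    field_simp
    ring

/-- Error bound for the NeurVec-corrected coarse-step Euler scheme: the error at
time `T` is bounded by the fine-step Euler global error plus a term controlled by
the mean-squared training loss `LS`. Here `Uhat n` denotes `û_{k n}`, the corrected
coarse-step iterate after `n` coarse steps of size `k * Δt`. -/
theorem neurvec_global_error
    (d : ℕ) (f N : EuclideanSpace ℝ (Fin d) → EuclideanSpace ℝ (Fin d))
    (L L_NV M T : ℝ) (hL : 0 < L) (hLNV : 0 < L_NV) (hT : 0 < T)
    (hf : ∀ x y, ‖f x - f y‖ ≤ L * ‖x - y‖)
    (u u' u'' : ℝ → EuclideanSpace ℝ (Fin d)) (c₀ : EuclideanSpace ℝ (Fin d))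
    (hu0 : u 0 = c₀)
    (hu' : ∀ t ∈ Set.Icc (0 : ℝ) T, HasDerivAt u (u' t) t)
    (hode : ∀ t ∈ Set.Icc (0 : ℝ) T, u' t = f (u t))
    (hu'' : ∀ t ∈ Set.Icc (0 : ℝ) T, HasDerivAt u' (u'' t) t)
    (hM : ∀ t ∈ Set.Icc (0 : ℝ) T, ‖u'' t‖ ≤ M)
    (p k : ℕ) (hp : 0 < p) (hk : 0 < k)
    (Δt : ℝ) (hΔt : Δt = T / (p * k))
    (hN : ∀ x y, ‖N x - N y‖ ≤ (k * Δt * L_NV) * ‖x - y‖)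
    (U : ℕ → EuclideanSpace ℝ (Fin d))
    (hU0 : U 0 = c₀)
    (hUstep : ∀ n, U (n + 1) = U n + Δt • f (U n))
    (Uhat : ℕ → EuclideanSpace ℝ (Fin d))
    (hUhat0 : Uhat 0 = c₀)
    (hUhatstep : ∀ n, Uhat (n + 1) = Uhat n + (k * Δt) • f (Uhat n) + N (Uhat n))
    (V : ℕ → EuclideanSpace ℝ (Fin d))
    (hV : ∀ n, V n = (k * Δt)⁻¹ • (U (k * (n + 1)) - U (k * n)) - f (U (k * n))
      - (k * Δt)⁻¹ • N (U (k * n)))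
    (LS : ℝ)
    (hLS : LS = (1 / p) * ∑ n ∈ Finset.range p, ‖V n‖ ^ 2) :
    ‖Uhat p - u T‖ ≤ (M * Real.exp (2 * T * L) / (2 * L)) * Δt
      + (Real.sqrt T * Real.exp (T * (L + L_NV)) / Real.sqrt (L + L_NV))
        * Real.sqrt LS := by
  have hp' : (0 : ℝ) < p := by exact_mod_cast hp
  have hk' : (0 : ℝ) < k := by exact_mod_cast hk
  have hΔ : 0 < Δt := by rw [hΔt]; positivity
  have hM0 : 0 ≤ M := (norm_nonneg _).trans (hM 0 ⟨le_rfl, hT.le⟩)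
  have hTe : ((k * p : ℕ) : ℝ) * Δt = T := by
    rw [hΔt]; push_cast; field_simp
  have hEuler : ‖U (k * p) - u T‖ ≤ (M * Real.exp (2 * T * L) / (2 * L)) * Δt := by
    have h1 := euler_error hL hΔ hf hu' hode hu'' hM (hU0.trans hu0.symm) hUstep (k * p) hTe.le
    rw [hTe] at h1
    have h2 : (1 + Δt * L) ^ (k * p) ≤ Real.exp (T * L) :=
      one_add_pow_le_exp (by positivity) _ (by rw [← hTe]; ring)
    have h3 : Real.exp (2 * T * L) = Real.exp (T * L) ^ 2 := by
      rw [← Real.exp_nat_mul]; congr 1; push_cast; ring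
    have h4 : (1 + Δt * L) ^ (k * p) - 1 ≤ Real.exp (2 * T * L) / 2 := by
      rw [h3]; nlinarith [sq_nonneg (Real.exp (T * L) - 1)]
    refine (h1.trans (mul_le_mul_of_nonneg_left h4 (by positivity))).trans (le_of_eq ?_)
    field_simp
  set h : ℝ := k * Δt with hh
  have hh0 : 0 < h := by positivity
  have hph : p * h = T := by rw [hh, ← hTe]; push_cast; ring
  set A : ℝ := L + L_NV with hA
  have hA0 : 0 < A := by positivity
  have hNV : ‖Uhat p - U (k * p)‖ ≤ (√T * Real.exp (T * A) / √A) * √LS := by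
    have hstep : ∀ n, ‖Uhat (n + 1) - U (k * (n + 1))‖
        ≤ (1 + h * A) * ‖Uhat n - U (k * n)‖ + h * ‖V n‖ := by
      intro n
      have e : Uhat (n + 1) - U (k * (n + 1)) = (Uhat n - U (k * n))
          + h • (f (Uhat n) - f (U (k * n))) + (N (Uhat n) - N (U (k * n))) - h • V n := by
        rw [hV, hUhatstep]
        simp only [smul_sub, smul_smul, mul_inv_cancel₀ hh0.ne', one_smul]
        abel
      have h1 : ‖h • (f (Uhat n) - f (U (k * n)))‖ ≤ h * (L * ‖Uhat n - U (k * n)‖) := by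
        rw [norm_smul, Real.norm_of_nonneg hh0.le]
        exact mul_le_mul_of_nonneg_left (hf _ _) hh0.le
      have h2 : ‖h • V n‖ = h * ‖V n‖ := by rw [norm_smul, Real.norm_of_nonneg hh0.le]
      have h3 := hN (Uhat n) (U (k * n))
      rw [e]
      refine (norm_sub_le _ _).trans ?_
      refine (add_le_add_left (norm_add₃_le) _).trans ?_
      rw [h2, hA]
      linarith
    have hg := sq_gronwall (a := fun n => ‖Uhat n - U (k * n)‖) (b := fun n => h * ‖V n‖)
      (q := 1 + h * A) (by nlinarith [mul_pos hh0 hA0]) (fun n => norm_nonneg _)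
      (fun n => by positivity) (by simp [hUhat0, hU0]) hstep p
    have hq : (1 + h * A) ^ p ≤ Real.exp (T * A) :=
      one_add_pow_le_exp (by positivity) _ (by rw [← hph]; ring)
    have hsum : ∑ i ∈ Finset.range p, (h * ‖V i‖) ^ 2 = h * T * LS := by
      simp only [mul_pow]
      rw [← Finset.mul_sum, hLS, ← hph]
      field_simp
    have hLS0 : 0 ≤ LS := by
      rw [hLS]; positivity
    simp only [hsum] at hg
    have hq2 : ((1 + h * A) ^ p) ^ 2 - 1 ≤ Real.exp (T * A) ^ 2 := by
      have := pow_le_pow_left₀ (by positivity) hq 2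
      linarith
    have h5 : (h * A) * ‖Uhat p - U (k * p)‖ ^ 2 ≤ Real.exp (T * A) ^ 2 * (h * T * LS) := by
      refine le_trans (mul_le_mul_of_nonneg_right ?_ (sq_nonneg _))
        (hg.trans (mul_le_mul_of_nonneg_right hq2 (by positivity)))
      nlinarith [mul_pos hh0 hA0]
    refine (pow_le_pow_iff_left₀ (by positivity) (by positivity) two_ne_zero).mp ?_
    rw [mul_pow, div_pow, mul_pow, Real.sq_sqrt hT.le, Real.sq_sqrt hA0.le, Real.sq_sqrt hLS0,
      div_mul_eq_mul_div, le_div_iff₀ hA0]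
    refine le_of_mul_le_mul_left ?_ hh0
    linarith
  have := norm_add_le (Uhat p - U (k * p)) (U (k * p) - u T)
  rw [sub_add_sub_cancel] at this
  linarith
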